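/- Let ρ ≥ 1, ε > 0, and let e₁, e₂, e₃, e₄ ∈ ℝ³ (indices taken modulo 4) be vectors such that for every i: ε/ρ ≤ ‖eᵢ‖ ≤ ε and ‖eᵢ‖·‖e_{i+1}‖ ≤ ρ‖eᵢ × e_{i+1}‖. For each i, let αᵢ := ∠(e_{i−1} − eᵢ, e_{i−1}) and βᵢ := ∠(e_{i+1} − eᵢ, e_{i+1}) be the two angles opposing the edge eᵢ in the triangles conv{0, eᵢ, e_{i−1}} and conv{0, eᵢ, e_{i+1}}. If the angle defect satisfies 2π − ∑_{i=1}^{4} ∠(eᵢ, e_{i+1}) ≤ 1/ρ², then there exist at least three indices i ∈ {1,2,3,4} such that αᵢ ≥ 1/(2ρ²), βᵢ ≥ 1/(2ρ²), and αᵢ + βᵢ ≤ π − 1/(2ρ²). -/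

import Mathlib

/-!
In each triangle with vertices `0`, `eᵢ`, `eᵢ₊₁` the law of sines together with `sin θ ≤ θ` bounds
the angles at `eᵢ` and `eᵢ₊₁` below, so every opposing angle is at least `δ`. The angle sums of the
`n` triangles give `∑ (αᵢ + βᵢ) = (n - 2)π + defect`. Had `n - 2` of the edges `αᵢ + βᵢ > π - δ`,
while `αᵢ + βᵢ ≥ 2δ` at the other two, this sum would exceed `(n - 2)(π - δ) + 4δ`, which forces
`defect > (6 - n)δ`; for `n = 4` this is `defect > 2δ = 1 / ρ²`.
-/

/-- The cross product on Euclidean 3-space. -/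
noncomputable def cross3 (a b : EuclideanSpace ℝ (Fin 3)) : EuclideanSpace ℝ (Fin 3) :=
  (WithLp.equiv 2 (Fin 3 → ℝ)).symm
    ![a 1 * b 2 - a 2 * b 1, a 2 * b 0 - a 0 * b 2, a 0 * b 1 - a 1 * b 0]

theorem lt_card_filter_le_of_sum_le {ι R : Type*} [Fintype ι] [CommRing R] [LinearOrder R]
    [IsStrictOrderedRing R] {f : ι → R} {a b : R} {k : ℕ} (hk : k < Fintype.card ι)
    (ha : ∀ i, a ≤ f i) (hsum : ∑ i, f i ≤ k * a + (Fintype.card ι - k) * b) :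
    k < (Finset.univ.filter fun i ↦ f i ≤ b).card := by
  by_contra! hgood
  set bad := Finset.univ.filter fun i ↦ b < f i with hbad_def
  have hcard : (Fintype.card ι : R) - k ≤ bad.card := by
    have hsplit := Finset.card_filter_add_card_filter_not (s := Finset.univ) fun i ↦ f i ≤ b
    simp only [not_le, ← hbad_def, Finset.card_univ] at hsplit
    rw [sub_le_iff_le_add]
    exact_mod_cast (by omega : Fintype.card ι ≤ bad.card + k)
  have hpos : (0 : R) < Fintype.card ι - k := sub_pos.2 (by exact_mod_cast hk)
  have hbad : bad.Nonempty := Finset.card_pos.1 (by exact_mod_cast hpos.trans_le hcard)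
  have hexcess : ∑ i, (f i - a) ≤ (Fintype.card ι - k) * (b - a) := by
    rw [Finset.sum_sub_distrib, Finset.sum_const, Finset.card_univ, nsmul_eq_mul]
    linear_combination hsum
  have hab : 0 ≤ b - a :=
    nonneg_of_mul_nonneg_right
      ((Finset.sum_nonneg fun i _ ↦ sub_nonneg.2 (ha i)).trans hexcess) hpos
  refine lt_irrefl (bad.card * (b - a)) ?_
  calc (bad.card * (b - a) : R)
      = ∑ _i ∈ bad, (b - a) := by rw [Finset.sum_const, nsmul_eq_mul]
    _ < ∑ i ∈ bad, (f i - a) :=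
        Finset.sum_lt_sum_of_nonempty hbad fun i hi ↦
          sub_lt_sub_right (Finset.mem_filter.1 hi).2 a
    _ ≤ ∑ i, (f i - a) :=
        Finset.sum_le_univ_sum_of_nonneg fun i ↦ sub_nonneg.2 (ha i)
    _ ≤ (Fintype.card ι - k) * (b - a) := hexcess
    _ ≤ bad.card * (b - a) := mul_le_mul_of_nonneg_right hcard hab

open InnerProductGeometry Real

section OpposingAngle

variable {V : Type*} [NormedAddCommGroup V] [InnerProductSpace ℝ V]

/-- The angle at `y` of the triangle with vertices `0`, `x`, `y`: the one opposing the edge `x`. -/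
noncomputable def opposingAngle (x y : V) : ℝ :=
  angle (y - x) y

theorem angle_add_opposingAngle_add_opposingAngle (x : V) {y : V} (hy : y ≠ 0) :
    angle x y + opposingAngle y x + opposingAngle x y = π := by
  rw [opposingAngle, opposingAngle, angle_comm (x - y) x, angle_comm (y - x) y]
  exact angle_add_angle_sub_add_angle_sub_eq_pi x hy

theorem sin_angle_mul_norm_eq_sin_opposingAngle_mul_norm_sub (x y : V) :
    sin (angle x y) * ‖x‖ = sin (opposingAngle x y) * ‖x - y‖ := by
  rw [sin_angle_mul_norm_eq_sin_angle_mul_norm, opposingAngle, ← neg_sub y x, angle_neg_right,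
    sin_pi_sub, angle_comm, norm_neg]

theorem one_div_le_opposingAngle {ρ : ℝ} {x y : V} (hx : x ≠ 0) (hyx : ‖y‖ ≤ ρ * ‖x‖)
    (hsin : 1 ≤ ρ * sin (angle x y)) : 1 / (ρ * (ρ + 1)) ≤ opposingAngle x y := by
  have hρ : 0 < ρ := pos_of_mul_pos_left (one_pos.trans_le hsin) (sin_angle_nonneg x y)
  have hangle : 0 ≤ opposingAngle x y := angle_nonneg _ _
  have hsin_le : sin (angle x y) ≤ opposingAngle x y * (ρ + 1) := by
    refine le_of_mul_le_mul_right ?_ (norm_pos_iff.2 hx)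
    calc sin (angle x y) * ‖x‖
        = sin (opposingAngle x y) * ‖x - y‖ :=
          sin_angle_mul_norm_eq_sin_opposingAngle_mul_norm_sub x y
      _ ≤ opposingAngle x y * (‖x‖ + ‖y‖) := by
          gcongr
          exacts [sin_le hangle, norm_sub_le x y]
      _ ≤ opposingAngle x y * (‖x‖ + ρ * ‖x‖) := by gcongr
      _ = opposingAngle x y * (ρ + 1) * ‖x‖ := by ring
  rw [div_le_iff₀ (by positivity)]
  calc 1 ≤ ρ * sin (angle x y) := hsin
    _ ≤ ρ * (opposingAngle x y * (ρ + 1)) := by gcongr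
    _ = opposingAngle x y * (ρ * (ρ + 1)) := by ring

end OpposingAngle

section VertexStar

variable {V : Type*} [NormedAddCommGroup V] [InnerProductSpace ℝ V] {n : ℕ}

/-- The discrete Gauss curvature at a vertex placed at the origin, with edge vectors `e` in cyclic
order. -/
noncomputable def angleDefect [NeZero n] (e : ZMod n → V) : ℝ :=
  2 * π - ∑ i, angle (e i) (e (i + 1))

/-- The edge `e i` of the vertex star with edge vectors `e` is `δ`-Delaunay; its opposing angles
lie in the triangles that it spans with `e (i - 1)` and with `e (i + 1)`. -/
def IsDelaunayEdge (δ : ℝ) (e : ZMod n → V) (i : ZMod n) : Prop :=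
  δ ≤ opposingAngle (e i) (e (i - 1)) ∧ δ ≤ opposingAngle (e i) (e (i + 1)) ∧
    opposingAngle (e i) (e (i - 1)) + opposingAngle (e i) (e (i + 1)) ≤ π - δ

theorem sum_opposingAngle_add_opposingAngle [NeZero n] {e : ZMod n → V} (he : ∀ i, e i ≠ 0) :
    ∑ i, (opposingAngle (e i) (e (i - 1)) + opposingAngle (e i) (e (i + 1))) =
      (n - 2) * π + angleDefect e := by
  have hshift : ∑ i, opposingAngle (e i) (e (i - 1)) = ∑ i, opposingAngle (e (i + 1)) (e i) := by
    rw [← Equiv.sum_comp (Equiv.addRight (1 : ZMod n))]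
    simp only [Equiv.coe_addRight, add_sub_cancel_right]
  have htriangles : ∑ i, (angle (e i) (e (i + 1)) + opposingAngle (e (i + 1)) (e i) +
      opposingAngle (e i) (e (i + 1))) = n * π := by
    simp only [angle_add_opposingAngle_add_opposingAngle _ (he _), Finset.sum_const,
      Finset.card_univ, ZMod.card, nsmul_eq_mul]
  rw [Finset.sum_add_distrib, Finset.sum_add_distrib] at htriangles
  rw [Finset.sum_add_distrib, hshift, angleDefect]
  linear_combination htriangles

theorem exists_three_isDelaunayEdge_of_le_opposingAngle [NeZero n] (hn : 3 ≤ n) {δ : ℝ}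
    {e : ZMod n → V} (he : ∀ i, e i ≠ 0) (hα : ∀ i, δ ≤ opposingAngle (e i) (e (i - 1)))
    (hβ : ∀ i, δ ≤ opposingAngle (e i) (e (i + 1))) (hdefect : angleDefect e ≤ (6 - n) * δ) :
    ∃ s : Finset (ZMod n), 3 ≤ s.card ∧ ∀ i ∈ s, IsDelaunayEdge δ e i := by
  refine ⟨_, lt_card_filter_le_of_sum_le (k := 2) (a := 2 * δ) (b := π - δ)
    (by rwa [ZMod.card]) (fun i ↦ ?_) ?_,
    fun i hi ↦ ⟨hα i, hβ i, (Finset.mem_filter.1 hi).2⟩⟩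
  · linarith [hα i, hβ i]
  · rw [sum_opposingAngle_add_opposingAngle he, ZMod.card]
    push_cast
    linear_combination hdefect

theorem three_delta_delaunay_edges_general [NeZero n] (hn : 3 ≤ n) {ρ δ : ℝ}
    (hδ : δ ≤ 1 / (ρ * (ρ + 1))) {e : ZMod n → V} (he : ∀ i, e i ≠ 0)
    (hratio : ∀ i, ‖e i‖ ≤ ρ * ‖e (i + 1)‖ ∧ ‖e (i + 1)‖ ≤ ρ * ‖e i‖)
    (hsin : ∀ i, 1 ≤ ρ * sin (angle (e i) (e (i + 1))))
    (hdefect : angleDefect e ≤ (6 - n) * δ) :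
    ∃ s : Finset (ZMod n), 3 ≤ s.card ∧ ∀ i ∈ s, IsDelaunayEdge δ e i := by
  have hnext (i : ZMod n) : δ ≤ opposingAngle (e i) (e (i + 1)) :=
    hδ.trans (one_div_le_opposingAngle (he i) (hratio i).2 (hsin i))
  have hprev (i : ZMod n) : δ ≤ opposingAngle (e (i + 1)) (e i) :=
    hδ.trans (one_div_le_opposingAngle (he (i + 1)) (hratio i).1 (angle_comm (e i) _ ▸ hsin i))
  exact exists_three_isDelaunayEdge_of_le_opposingAngle hn he
    (fun i ↦ by simpa only [sub_add_cancel] using hprev (i - 1)) hnext hdefect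

end VertexStar

theorem norm_cross3 (x y : EuclideanSpace ℝ (Fin 3)) :
    ‖cross3 x y‖ = ‖x‖ * ‖y‖ * sin (angle x y) := by
  rw [← norm_ofLp_crossProduct, cross_apply]
  rfl

theorem one_le_mul_sin_angle_of_norm_mul_norm_le {ρ : ℝ} {x y : EuclideanSpace ℝ (Fin 3)}
    (hx : x ≠ 0) (hy : y ≠ 0) (h : ‖x‖ * ‖y‖ ≤ ρ * ‖cross3 x y‖) :
    1 ≤ ρ * sin (angle x y) := by
  refine le_of_mul_le_mul_left ?_ (mul_pos (norm_pos_iff.2 hx) (norm_pos_iff.2 hy))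
  rw [norm_cross3] at h
  linarith

theorem one_div_two_mul_sq_le {ρ : ℝ} (hρ : 1 ≤ ρ) :
    1 / (2 * ρ ^ 2) ≤ 1 / (ρ * (ρ + 1)) :=
  one_div_le_one_div_of_le (by positivity) (by nlinarith)

/-- At a valence-four vertex (at the origin) of a vertex star with
shape regularity `ρ`, edge lengths in `[ε/ρ, ε]`, and angle defect at most `1/ρ²`,
at least three of the four edges are `(1/(2ρ²))`-Delaunay. -/
theorem three_delta_delaunay_edges (ρ ε : ℝ) (hρ : 1 ≤ ρ) (hε : 0 < ε)
    (e : ZMod 4 → EuclideanSpace ℝ (Fin 3))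
    (hlen : ∀ i, ε / ρ ≤ ‖e i‖ ∧ ‖e i‖ ≤ ε)
    (hreg : ∀ i, ‖e i‖ * ‖e (i + 1)‖ ≤ ρ * ‖cross3 (e i) (e (i + 1))‖)
    (hdefect :
      2 * Real.pi - ∑ i : ZMod 4, InnerProductGeometry.angle (e i) (e (i + 1)) ≤ 1 / ρ ^ 2) :
    ∃ s : Finset (ZMod 4), 3 ≤ s.card ∧ ∀ i ∈ s,
      1 / (2 * ρ ^ 2) ≤ InnerProductGeometry.angle (e (i - 1) - e i) (e (i - 1)) ∧
      1 / (2 * ρ ^ 2) ≤ InnerProductGeometry.angle (e (i + 1) - e i) (e (i + 1)) ∧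
      InnerProductGeometry.angle (e (i - 1) - e i) (e (i - 1)) +
          InnerProductGeometry.angle (e (i + 1) - e i) (e (i + 1))
        ≤ Real.pi - 1 / (2 * ρ ^ 2) := by
  have hρ₀ : 0 < ρ := one_pos.trans_le hρ
  have he (i) : e i ≠ 0 := norm_pos_iff.1 ((div_pos hε hρ₀).trans_le (hlen i).1)
  have hratio (i j) : ‖e i‖ ≤ ρ * ‖e j‖ := (hlen i).2.trans ((div_le_iff₀' hρ₀).1 (hlen j).1)
  refine three_delta_delaunay_edges_general (by norm_num) (one_div_two_mul_sq_le hρ) he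
    (fun i ↦ ⟨hratio _ _, hratio _ _⟩)
    (fun i ↦ one_le_mul_sin_angle_of_norm_mul_norm_le (he _) (he _) (hreg i))
    (hdefect.trans_eq ?_)
  push_cast
  field_simp
  norm_num
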